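/- Let G be a finite simple graph whose vertex set carries a linear order such that |B_t| ≤ r for every vertex t (which holds whenever the order witnesses linear rankwidth at most r). Then for every vertex t, the number of vertices v with v ≤ t ≤ τ(v) is at most r + 2; equivalently, the intersection graph of the activity intervals I_v has at most r + 2 intervals through any point and hence has pathwidth at most r + 1. -/

import Mathlib

/-!
If `v ≤ t ≤ τ(v)` and `v ∉ B_t`, then `v` leaves the active basis exactly at `t`. It suffices that
at most one vertex `v < t` does so (`leaving_unique`); together with `v = t` itself this gives
the bound `|B_t| + 2`.

Passing from the predecessor `s` of `t` to `t` deletes the single coordinate `t` from the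
neighborhood vectors over `𝔽₂`. If `u < v` both become dependent on smaller vertices by this
deletion, then each of the two dependencies, read beyond `s`, has sum the unit vector at `t`.
Adding them expresses `v` beyond `s` through smaller vertices, contradicting `v ∈ B_s`.
-/

open scoped Classical symmDiff

variable {V : Type}

/-- `N^{>t}(v)`: the neighbors of `v` that are greater than `t`. -/
def Ngt (G : SimpleGraph V) [LT V] (t v : V) : Set V := {w | G.Adj v w ∧ t < w}

/-- `N_⊕(M)`: the symmetric difference `⊕_{v ∈ M} N(v)` of the neighborhoods of the
vertices of `M`, i.e. the set of vertices adjacent to an odd number of elements of `M`. -/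
noncomputable def NSym (G : SimpleGraph V) (M : Finset V) : Set V :=
  {w | Odd (M.filter (fun v => G.Adj v w)).card}

/-- `N_⊕^{>t}(M) = N_⊕(M) ∩ V^{>t}`. -/
noncomputable def NSymGt (G : SimpleGraph V) [LT V] (t : V) (M : Finset V) : Set V :=
  NSym G M ∩ {w | t < w}

/-- The active basis `B_t`: the set of vertices `v ≤ t` such that `N^{>t}(v)` is not the
symmetric difference of the `N^{>t}`-neighborhoods of a set of vertices smaller than `v`. -/
noncomputable def Bset [Fintype V] [LinearOrder V] (G : SimpleGraph V) (t : V) : Finset V :=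
  Finset.univ.filter (fun v => v ≤ t ∧
    ¬ ∃ B : Finset V, (∀ b ∈ B, b < v) ∧ Ngt G t v = NSymGt G t B)

/-- `τ(v)`: the least `t ≥ v` with `v ∉ B_t`.  (It exists since `v ∉ B_{max V}`; the
maximum of `V` is inserted only to make the minimum well-defined.) -/
noncomputable def tau [Fintype V] [LinearOrder V] [Nonempty V] (G : SimpleGraph V) (v : V) :
    V :=
  (insert (Finset.univ.max' Finset.univ_nonempty)
    (Finset.univ.filter (fun t => v ≤ t ∧ v ∉ Bset G t))).min' (Finset.insert_nonempty _ _)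

/-- `τ(M) = min_{v ∈ M} τ(v)` for a nonempty finset `M` (junk value for `M = ∅`). -/
noncomputable def tauSet [Fintype V] [LinearOrder V] [Nonempty V] (G : SimpleGraph V)
    (M : Finset V) : V :=
  if h : M.Nonempty then (M.image (tau G)).min' (h.image _)
  else Finset.univ.max' Finset.univ_nonempty

/-- A nonempty set `M` is active if `max M < τ(M)`. -/
def ActiveSet [Fintype V] [LinearOrder V] [Nonempty V] (G : SimpleGraph V) (M : Finset V) :
    Prop :=
  ∃ h : M.Nonempty, M.max' h < tauSet G M

/-- Membership in the collection `Z`: the empty set, the singletons, and the active sets. -/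
def Zmem [Fintype V] [LinearOrder V] [Nonempty V] (G : SimpleGraph V) (M : Finset V) : Prop :=
  M = ∅ ∨ (∃ v : V, M = {v}) ∨ ActiveSet G M

/-- `F₀(v)`: the unique subset `B` of `B_{τ(v)}` with `N^{>τ(v)}(v) = N_⊕^{>τ(v)}(B)`. -/
noncomputable def F0 [Fintype V] [LinearOrder V] [Nonempty V] (G : SimpleGraph V) (v : V) :
    Finset V :=
  if h : ∃ B : Finset V, B ⊆ Bset G (tau G v) ∧ Ngt G (tau G v) v = NSymGt G (tau G v) B
  then h.choose else ∅

/-- The map `F`: `F(∅) = ∅` and `F(M) = M ∆ {v} ∆ F₀(v)` where `v` is the (for `M ∈ Z`,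
unique) element of `M` with `τ(v) = τ(M)`. -/
noncomputable def Fmap [Fintype V] [LinearOrder V] [Nonempty V] (G : SimpleGraph V)
    (M : Finset V) : Finset V :=
  if h : ∃ v ∈ M, tau G v = tauSet G M
  then (M ∆ {h.choose}) ∆ F0 G h.choose
  else ∅

/-- Symmetric difference of index sets adds the vectors `N_⊕` over `𝔽₂`. -/
theorem mem_NSym_symmDiff [DecidableEq V] (G : SimpleGraph V) (A B : Finset V) (w : V) :
    w ∈ NSym G (A ∆ B) ↔ ¬ (w ∈ NSym G A ↔ w ∈ NSym G B) := by
  have hf : (A ∆ B).filter (fun v => G.Adj v w) =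
      (A.filter (fun v => G.Adj v w)) ∆ (B.filter (fun v => G.Adj v w)) := by
    ext x
    simp only [Finset.mem_filter, Finset.mem_symmDiff]
    tauto
  simp only [NSym, Set.mem_ofPred_eq, hf]
  generalize A.filter (fun v => G.Adj v w) = P
  generalize B.filter (fun v => G.Adj v w) = Q
  have h1 : (P ∆ Q).card = (P \ Q).card + (Q \ P).card :=
    Finset.card_union_of_disjoint disjoint_sdiff_sdiff
  have h2 := Finset.card_sdiff_add_card_inter P Q
  have h3 := Finset.card_sdiff_add_card_inter Q P
  rw [Finset.inter_comm] at h3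
  simp only [Nat.odd_iff]
  omega

theorem mem_NSym_singleton (G : SimpleGraph V) (u w : V) :
    w ∈ NSym G {u} ↔ G.Adj u w := by
  by_cases h : G.Adj u w <;> simp [NSym, Finset.filter_singleton, h]

/-- From `v` until just before `τ(v)` the vertex `v` is active. -/
theorem mem_Bset_of_lt_tau [Fintype V] [LinearOrder V] [Nonempty V] (G : SimpleGraph V)
    {v s : V} (hvs : v ≤ s) (hs : s < tau G v) : v ∈ Bset G s := by
  by_contra h
  refine absurd hs (not_lt.mpr (Finset.min'_le _ _ ?_))
  simp [hvs, h]

/-- A vertex `v ≤ t` outside `B_t` is spanned beyond `t` by smaller vertices. -/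
theorem exists_of_notMem_Bset [Fintype V] [LinearOrder V] (G : SimpleGraph V)
    {v t : V} (hvt : v ≤ t) (h : v ∉ Bset G t) :
    ∃ B : Finset V, (∀ b ∈ B, b < v) ∧ ∀ w, t < w → (G.Adj v w ↔ w ∈ NSym G B) := by
  simp only [Bset, Finset.mem_filter, Finset.mem_univ, true_and, hvt, not_not] at h
  obtain ⟨B, hB, he⟩ := h
  refine ⟨B, hB, fun w hw => ?_⟩
  have := Set.ext_iff.mp he w
  simpa [Ngt, NSymGt, hw] using this

/-- Two distinct vertices below `t` cannot both leave the active basis exactly at `t`: with `s` the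
predecessor of `t`, both dependencies beyond `t` fail beyond `s` only in the coordinate `t`, so
their sum is a dependency beyond `s`. -/
theorem leaving_unique [Fintype V] [LinearOrder V] [Nonempty V] (G : SimpleGraph V)
    {u v t : V} (huv : u < v) (hvt : v < t) (hu : t ≤ tau G u) (hv : t ≤ tau G v)
    (hut' : u ∉ Bset G t) : v ∈ Bset G t := by
  by_contra hvt'
  obtain ⟨s, hvs, hst⟩ := exists_le_covBy_of_lt hvt
  have hus : u ∈ Bset G s := mem_Bset_of_lt_tau G (huv.le.trans hvs) (hst.lt.trans_le hu)
  have hvs' : v ∈ Bset G s := mem_Bset_of_lt_tau G hvs (hst.lt.trans_le hv)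
  obtain ⟨A, hA, hAe⟩ := exists_of_notMem_Bset G (huv.trans hvt).le hut'
  obtain ⟨B, hB, hBe⟩ := exists_of_notMem_Bset G hvt.le hvt'
  have hgt : ∀ w, s < w → w = t ∨ t < w := fun w hw =>
    (hst.ge_of_gt hw).eq_or_lt.imp Eq.symm id
  simp only [Bset, Finset.mem_filter, Finset.mem_univ, true_and] at hvs' hus
  -- A dependency that also held in coordinate `t` would already hold beyond `s`.
  have key : ∀ (x : V) (C : Finset V), (∀ b ∈ C, b < x) →
      (∀ w, t < w → (G.Adj x w ↔ w ∈ NSym G C)) →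
      (¬ ∃ D : Finset V, (∀ b ∈ D, b < x) ∧ Ngt G s x = NSymGt G s D) →
      ¬ (G.Adj x t ↔ t ∈ NSym G C) := by
    intro x C hC hCe hn ht
    refine hn ⟨C, hC, Set.ext fun w => ?_⟩
    simp only [Ngt, NSymGt, Set.mem_ofPred_eq, Set.mem_inter_iff]
    refine and_congr_left fun hw => ?_
    rcases hgt w hw with rfl | h
    · exact ht
    · exact hCe w h
  have h1 := key u A hA hAe hus.2
  have h2 := key v B hB hBe hvs'.2
  refine key v (B ∆ (A ∆ {u})) ?_ ?_ hvs'.2 ?_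
  · intro b hb
    simp only [Finset.mem_symmDiff, Finset.mem_singleton] at hb
    rcases hb with hb | ⟨hb | hb, -⟩
    · exact hB b hb.1
    · exact (hA b hb.1).trans huv
    · exact hb.1 ▸ huv
  · intro w hw
    have := hAe w hw
    have := hBe w hw
    simp only [mem_NSym_symmDiff, mem_NSym_singleton]
    tauto
  · simp only [mem_NSym_symmDiff, mem_NSym_singleton]
    clear key hus hvs' hut' hvt' hAe hBe
    tauto

/-- If `|B_t| ≤ r` for every `t` (as when the order witnesses linear rankwidth at most `r`),
then at most `r + 2` activity intervals `I_v = [v, τ(v)]` pass through any point `t`. -/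
theorem activity_intervals_bounded [Fintype V] [LinearOrder V] [Nonempty V] (G : SimpleGraph V)
    (r : ℕ) (hB : ∀ t : V, (Bset G t).card ≤ r) (t : V) :
    (Finset.univ.filter (fun v : V => v ≤ t ∧ t ≤ tau G v)).card ≤ r + 2 := by
  have hone : (Finset.univ.filter
      (fun v : V => v < t ∧ t ≤ tau G v ∧ v ∉ Bset G t)).card ≤ 1 := by
    rw [Finset.card_le_one]
    intro a ha b hb
    simp only [Finset.mem_filter, Finset.mem_univ, true_and] at ha hb
    rcases lt_trichotomy a b with h | h | h
    · exact absurd (leaving_unique G h hb.1 ha.2.1 hb.2.1 ha.2.2) hb.2.2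
    · exact h
    · exact absurd (leaving_unique G h ha.1 hb.2.1 ha.2.1 hb.2.2) ha.2.2
  have hsub : Finset.univ.filter (fun v : V => v ≤ t ∧ t ≤ tau G v) ⊆
      insert t (Bset G t ∪ Finset.univ.filter
        (fun v : V => v < t ∧ t ≤ tau G v ∧ v ∉ Bset G t)) := by
    intro v hv
    simp only [Finset.mem_filter, Finset.mem_univ, true_and, Finset.mem_insert,
      Finset.mem_union] at hv ⊢
    rcases hv.1.eq_or_lt with h | h
    · exact Or.inl h
    · tauto
  have h1 := Finset.card_le_card hsub
  have h2 := Finset.card_insert_le t (Bset G t ∪ Finset.univ.filter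
        (fun v : V => v < t ∧ t ≤ tau G v ∧ v ∉ Bset G t))
  have h3 := Finset.card_union_le (Bset G t) (Finset.univ.filter
        (fun v : V => v < t ∧ t ≤ tau G v ∧ v ∉ Bset G t))
  have h4 := hB t
  omega
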